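/- arXiv:2308.00577 — 2 statements merged into one kernel-verified Lean document; each statement's English description precedes it below -/
import Mathlib

section
/- Let B be a group, η : B → ℤ a surjective homomorphism with kernel L, m ≥ 1, and g ∈ B such that: (a) η(g) = 1 and g^{2m} commutes with every element of L; (b) there is a subgroup H ≤ L with g⁻ᵐ H gᵐ = H, with γ : H → H the automorphism γ(h) = g⁻ᵐ h gᵐ; (c) there is a subgroup G ≤ L such that L is the internal direct product of Gᵢ := gⁱ G g⁻ⁱ, i = 0, …, 2m−1, and Hⱼ := gʲ H g⁻ʲ, j = 0, …, m−1. Define θ₀ : (Fin (2m) → G) × (Fin m → H) → B by θ₀(a, b) = ∏_{i=0}^{2m−1} gⁱ a(i) g⁻ⁱ · ∏_{j=0}^{m−1} gʲ b(j) g⁻ʲ. Then θ₀ is a group isomorphism onto L which intertwines the twisted shift δ with conjugation by g, i.e. θ₀(δ(a, b)) = g · θ₀(a, b) · g⁻¹ for all (a, b). -/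
instance twNeZero (m : ℕ) [NeZero m] : NeZero (2 * m) :=
  ⟨by have := NeZero.ne m; omega⟩

/-- The twisted shift automorphism `δ` of `(Fin (2m) → G) × (Fin m → H)`:
`δ(a,b) = (a', b')` with `a'(i) = a(i−1)` (mod 2m), `b'(j) = b(j−1)` for `j ≠ 0` and
`b'(0) = γ(b(m−1))`. -/
def twShift (G H : Type*) [Group G] [Group H] (m : ℕ) [NeZero m] (γ : MulAut H) :
    MulAut ((Fin (2 * m) → G) × (Fin m → H)) where
  toFun p := (fun i => p.1 (i - 1),
              fun j => if j = 0 then γ (p.2 (j - 1)) else p.2 (j - 1))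
  invFun p := (fun i => p.1 (i + 1),
              fun j => if j + 1 = 0 then γ.symm (p.2 (j + 1)) else p.2 (j + 1))
  left_inv p := by
    refine Prod.ext ?_ ?_
    · funext i; simp
    · funext j
      by_cases h : j + 1 = 0
      · simp [h, eq_neg_of_add_eq_zero_left h]
      · simp [h]
  right_inv p := by
    refine Prod.ext ?_ ?_
    · funext i; simp
    · funext j
      by_cases h : j = 0 <;> simp [h]
  map_mul' p q := by
    refine Prod.ext ?_ ?_
    · rfl
    · funext j
      by_cases h : j = 0 <;> simp [h]

/-- The conjugate `g S g⁻¹` of a subgroup `S` by an element `g`. -/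
def conjSub {B : Type*} [Group B] (g : B) (S : Subgroup B) : Subgroup B :=
  Subgroup.map (MulAut.conj g).toMonoidHom S

/-- The ordered-product map `(Π i, gⁱ G g⁻ⁱ) × (Π j, gʲ H g⁻ʲ) → B`,
`(x, y) ↦ x₀⋯x_{2m−1} · y₀⋯y_{m−1}`. -/
def dmap2 {B : Type*} [Group B] (m : ℕ) (g : B) (G H : Subgroup B) :
    ((∀ i : Fin (2 * m), ↥(conjSub (g ^ (i : ℕ)) G)) ×
      (∀ j : Fin m, ↥(conjSub (g ^ (j : ℕ)) H))) → B :=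
  fun u => (List.ofFn fun i => (u.1 i : B)).prod * (List.ofFn fun j => (u.2 j : B)).prod

/-- The map `θ₀ : (Fin 2m → G) × (Fin m → H) → B`,
`θ₀(a, b) = ∏_{i<2m} gⁱ a(i) g⁻ⁱ · ∏_{j<m} gʲ b(j) g⁻ʲ`. -/
def theta0 {B : Type*} [Group B] (m : ℕ) [NeZero m] (g : B) (G H : Subgroup B) :
    ((Fin (2 * m) → ↥G) × (Fin m → ↥H)) → B :=
  fun p =>
    (List.ofFn fun i : Fin (2 * m) =>
        g ^ (i : ℕ) * ((p.1 i : B)) * (g ^ (i : ℕ))⁻¹).prod *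
    (List.ofFn fun j : Fin m =>
        g ^ (j : ℕ) * ((p.2 j : B)) * (g ^ (j : ℕ))⁻¹).prod

/-- The ordered product `∏ᵢ gⁱ a(i) g⁻ⁱ`. -/
def conjProd {B : Type*} [Group B] (g : B) {S : Subgroup B} {n : ℕ} (a : Fin n → S) : B :=
  (List.ofFn fun i : Fin n => g ^ (i : ℕ) * (a i : B) * (g ^ (i : ℕ))⁻¹).prod

lemma conjProd_one {B : Type*} [Group B] (g : B) {S : Subgroup B} {n : ℕ} :
    conjProd g (1 : Fin n → S) = 1 := by
  simp [conjProd]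

lemma conjProd_mulSingle_zero {B : Type*} [Group B] (g : B) {S : Subgroup B} {n : ℕ} [NeZero n]
    (x : S) : conjProd g (Pi.mulSingle (0 : Fin n) x) = x := by
  obtain _ | n := n
  · exact absurd rfl (NeZero.ne 0)
  · simp [conjProd, List.ofFn_succ]

lemma theta0_eq {B : Type*} [Group B] (m : ℕ) [NeZero m] (g : B) (G H : Subgroup B)
    (p : (Fin (2 * m) → G) × (Fin m → H)) :
    theta0 m g G H p = conjProd g p.1 * conjProd g p.2 := rfl

/-- The ordered product is unchanged by a cyclic shift of the factors, if the first factor may be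
moved to the end. -/
lemma prod_ofFn_eq_of_shift {B : Type*} [Group B] {n : ℕ} [NeZero n] (f h : Fin n → B)
    (hfh : ∀ i, f i = h (i - 1))
    (hc : (List.ofFn f).prod = (List.ofFn (Function.update f 0 1)).prod * f 0) :
    (List.ofFn f).prod = (List.ofFn h).prod := by
  obtain _ | n := n
  · simp
  · have hsucc (i : Fin n) : f i.succ = h i.castSucc := by
      rw [hfh, ← Fin.coeSucc_eq_succ, add_sub_cancel_right]
    have hzero : f 0 = h (Fin.last n) := by
      rw [hfh, zero_sub]
      congr 1
      exact Fin.ext (by simp [Fin.coe_neg_one])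
    rw [hc, List.ofFn_succ, List.ofFn_succ' h]
    simp [hsucc, hzero, Fin.succ_ne_zero, Function.update_of_ne]

lemma conjProd_eq_conj_of_shift {B : Type*} [Group B] (g : B) {S : Subgroup B} {n : ℕ} [NeZero n]
    (hmul : ∀ a b : Fin n → S, conjProd g (a * b) = conjProd g a * conjProd g b)
    (a a' : Fin n → S)
    (h : ∀ i : Fin n, g ^ (i : ℕ) * (a' i : B) * (g ^ (i : ℕ))⁻¹ =
      g * (g ^ ((i - 1 : Fin n) : ℕ) * (a (i - 1) : B) * (g ^ ((i - 1 : Fin n) : ℕ))⁻¹) * g⁻¹) :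
    conjProd g a' = g * conjProd g a * g⁻¹ := by
  have hconj : g * conjProd g a * g⁻¹ = (List.ofFn fun i : Fin n =>
      g * (g ^ (i : ℕ) * (a i : B) * (g ^ (i : ℕ))⁻¹) * g⁻¹).prod := by
    rw [← MulAut.conj_apply, conjProd, map_list_prod, List.map_ofFn]
    rfl
  rw [hconj]
  refine prod_ofFn_eq_of_shift _ _ h ?_
  have hsplit : a' = Function.update a' 0 1 * Pi.mulSingle 0 (a' 0) := by
    funext i
    by_cases hi : i = 0
    · subst hi; simp
    · simp [hi]
  have key := congrArg (conjProd g) hsplit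
  rw [hmul, conjProd_mulSingle_zero] at key
  refine key.trans ?_
  congr 1
  · unfold conjProd
    congr 2
    funext i
    by_cases hi : i = 0
    · subst hi; simp
    · simp [hi]
  · simp

/-- Coordinatewise conjugation, from copies of `S` to the conjugates `gⁱ S g⁻ⁱ`. -/
noncomputable def piConjEquiv {B : Type*} [Group B] (g : B) (S : Subgroup B) (n : ℕ) :
    (Fin n → S) ≃* (∀ i : Fin n, conjSub (g ^ (i : ℕ)) S) :=
  MulEquiv.piCongrRight fun i =>
    S.equivMapOfInjective (MulAut.conj (g ^ (i : ℕ))).toMonoidHom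
      (MulAut.conj (g ^ (i : ℕ))).injective

lemma theta0_eq_dmap2 {B : Type*} [Group B] (m : ℕ) [NeZero m] (g : B) (G H : Subgroup B) :
    theta0 m g G H =
      dmap2 m g G H ∘ (MulEquiv.prodCongr (piConjEquiv g G (2 * m)) (piConjEquiv g H m)) :=
  rfl

lemma Fin.val_eq_sub_one_add_one {n : ℕ} [NeZero n] {i : Fin n} (hi : i ≠ 0) :
    (i : ℕ) = ((i - 1 : Fin n) : ℕ) + 1 := by
  obtain _ | n := n
  · exact i.elim0
  · have := Fin.val_ne_zero_iff.mpr hi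
    rw [Fin.coe_sub_one, if_neg hi]
    omega

lemma Fin.val_zero_sub_one_add_one {n : ℕ} [NeZero n] :
    ((0 - 1 : Fin n) : ℕ) + 1 = n := by
  obtain _ | n := n
  · exact absurd rfl (NeZero.ne 0)
  · rw [Fin.coe_sub_one, if_pos rfl]

lemma conj_conj_pow {B : Type*} [Group B] (g x : B) (k : ℕ) :
    g * (g ^ k * x * (g ^ k)⁻¹) * g⁻¹ = g ^ (k + 1) * x * (g ^ (k + 1))⁻¹ := by
  rw [pow_succ' g k]
  group

/-- Under the hypotheses of Statement 6, the map
`θ₀(a,b) = ∏ᵢ gⁱ a(i) g⁻ⁱ · ∏ⱼ gʲ b(j) g⁻ʲ` is a group isomorphism from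
`(Fin 2m → G) × (Fin m → H)` onto `L = ker η`, and it intertwines the twisted shift `δ`
with conjugation by `g`: `θ₀(δ(a,b)) = g · θ₀(a,b) · g⁻¹`. -/
theorem stmt_7 {B : Type*} [Group B] (η : B →* Multiplicative ℤ)
    (hsurj : Function.Surjective η) (m : ℕ) (hm : 1 ≤ m) [NeZero m] (g : B)
    (hg : η g = Multiplicative.ofAdd 1)
    (hcomm : ∀ v ∈ η.ker, Commute (g ^ (2 * m)) v)
    (H : Subgroup B) (hHL : H ≤ η.ker)
    (γ : MulAut ↥H)
    (hγ : ∀ h : ↥H, (γ h : B) = (g ^ m)⁻¹ * ↑h * g ^ m)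
    (G : Subgroup B) (hGL : G ≤ η.ker)
    (hhom : ∀ u v, dmap2 m g G H (u * v) = dmap2 m g G H u * dmap2 m g G H v)
    (hinj : Function.Injective (dmap2 m g G H))
    (hrange : Set.range (dmap2 m g G H) = (η.ker : Set B)) :
    (∀ p q : (Fin (2 * m) → ↥G) × (Fin m → ↥H),
        theta0 m g G H (p * q) = theta0 m g G H p * theta0 m g G H q) ∧
    Function.Injective (theta0 m g G H) ∧
    Set.range (theta0 m g G H) = (η.ker : Set B) ∧
    (∀ p : (Fin (2 * m) → ↥G) × (Fin m → ↥H),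
        theta0 m g G H (twShift ↥G ↥H m γ p) = g * theta0 m g G H p * g⁻¹) := by
  have hmul : ∀ p q : (Fin (2 * m) → ↥G) × (Fin m → ↥H),
      theta0 m g G H (p * q) = theta0 m g G H p * theta0 m g G H q := by
    intro p q
    simp only [theta0_eq_dmap2, Function.comp_apply, map_mul, hhom]
  refine ⟨hmul, ?_, ?_, fun p => ?_⟩
  · rw [theta0_eq_dmap2]
    exact hinj.comp (MulEquiv.injective _)
  · rw [theta0_eq_dmap2, (MulEquiv.surjective _).range_comp, hrange]
  have hmulG (a b : Fin (2 * m) → G) : conjProd g (a * b) = conjProd g a * conjProd g b := by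
    simpa [theta0_eq, conjProd_one] using hmul (a, 1) (b, 1)
  have hmulH (a b : Fin m → H) : conjProd g (a * b) = conjProd g a * conjProd g b := by
    simpa [theta0_eq, conjProd_one] using hmul (1, a) (1, b)
  have hG : conjProd g (twShift G H m γ p).1 = g * conjProd g p.1 * g⁻¹ := by
    refine conjProd_eq_conj_of_shift g hmulG _ _ fun i => ?_
    rw [conj_conj_pow]
    change g ^ (i : ℕ) * (p.1 (i - 1) : B) * (g ^ (i : ℕ))⁻¹ = _
    by_cases hi : i = 0
    · subst hi
      rw [Fin.val_zero_sub_one_add_one, (hcomm _ (hGL (p.1 (0 - 1)).2)).eq]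
      simp
    · rw [← Fin.val_eq_sub_one_add_one hi]
  have hH : conjProd g (twShift G H m γ p).2 = g * conjProd g p.2 * g⁻¹ := by
    refine conjProd_eq_conj_of_shift g hmulH _ _ fun j => ?_
    rw [conj_conj_pow]
    change g ^ (j : ℕ) * ((if j = 0 then γ (p.2 (j - 1)) else p.2 (j - 1) : H) : B) *
      (g ^ (j : ℕ))⁻¹ = _
    by_cases hj : j = 0
    · subst hj
      have hc := (hcomm _ (hHL (p.2 (0 - 1)).2)).eq
      rw [show g ^ (2 * m) = g ^ m * g ^ m by rw [two_mul, pow_add]] at hc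
      rw [Fin.val_zero_sub_one_add_one, if_pos rfl, hγ, Fin.val_zero, pow_zero, one_mul, inv_one,
        mul_one, eq_mul_inv_iff_mul_eq, mul_assoc, mul_assoc, inv_mul_eq_iff_eq_mul, ← hc, mul_assoc]
    · rw [if_neg hj, ← Fin.val_eq_sub_one_add_one hj]
  rw [theta0_eq, theta0_eq, hG, hH]
  group
end

section
/- Let g ∈ ℝ[x, y] be a squarefree homogeneous polynomial of degree d ≥ 2. Then there exists m ≥ 1 such that both x^m and y^m lie in the Jacobian ideal J(g) of g, i.e. in the ideal of ℝ[x, y] generated by the partial derivatives ∂g/∂x and ∂g/∂y. -/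
open MvPolynomial

/-- Setting `y = 1` turns `∂/∂x` into the derivative of univariate polynomials. -/
theorem aeval_X_one_pderiv_zero {R : Type*} [CommRing R] (g : MvPolynomial (Fin 2) R) :
    aeval ![Polynomial.X, (1 : Polynomial R)] (pderiv 0 g) =
      Polynomial.derivative (aeval ![Polynomial.X, (1 : Polynomial R)] g) := by
  induction g using MvPolynomial.induction_on with
  | C a => simp
  | add p q hp hq => simp [hp, hq]
  | mul_X p i hp =>
    fin_cases i <;>
      (simp [Derivation.leibniz, pderiv_X, hp]; try ring)

theorem natDegree_aeval_X_one_le {R : Type*} [CommRing R] {g : MvPolynomial (Fin 2) R} {d : ℕ}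
    (hg : g.IsHomogeneous d) :
    (aeval ![Polynomial.X, (1 : Polynomial R)] g).natDegree ≤ d := by
  have h := aeval_natDegree_le g hg.totalDegree_le ![Polynomial.X, (1 : Polynomial R)] (n := 1)
    (fun i => by
      fin_cases i
      · exact Polynomial.natDegree_X_le
      · simp)
  simpa using h

/-- The dehomogenization of a squarefree binary form is squarefree. -/
theorem squarefree_aeval_X_one {K : Type*} [Field K] {g : MvPolynomial (Fin 2) K} {d : ℕ}
    (hg : g.IsHomogeneous d) (hsf : Squarefree g) :
    Squarefree (aeval ![Polynomial.X, (1 : Polynomial K)] g) := by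
  rintro q ⟨r, hr⟩
  have hhom := Polynomial.homogenize_eq_of_isHomogeneous hg rfl
  have hne : q * q * r ≠ 0 := by
    intro h
    rw [hr, h, Polynomial.homogenize_zero] at hhom
    exact hsf.ne_zero hhom.symm
  have hq : q ≠ 0 := by rintro rfl; simp at hne
  have hr0 : r ≠ 0 := by rintro rfl; simp at hne
  have hdeg := natDegree_aeval_X_one_le hg
  rw [hr, Polynomial.natDegree_mul (mul_ne_zero hq hq) hr0, Polynomial.natDegree_mul hq hq] at hdeg
  obtain ⟨k, rfl⟩ := Nat.exists_eq_add_of_le hdeg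
  rw [hr, add_assoc, Polynomial.homogenize_mul _ _ (Polynomial.natDegree_mul hq hq).le (by lia),
    Polynomial.homogenize_mul _ _ le_rfl le_rfl] at hhom
  have hunit := hsf _ ⟨_, hhom.symm⟩
  simpa using hunit.map (aeval ![Polynomial.X, (1 : Polynomial K)])

/-- Two binary forms of the same degree whose dehomogenizations are coprime generate an ideal
containing all large powers of `y`. -/
theorem exists_X_one_pow_mem_span_pair {K : Type*} [Field K] {u v : MvPolynomial (Fin 2) K} {e : ℕ}
    (hu : u.IsHomogeneous e) (hv : v.IsHomogeneous e)
    (h : IsCoprime (aeval ![Polynomial.X, (1 : Polynomial K)] u)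
      (aeval ![Polynomial.X, (1 : Polynomial K)] v)) :
    ∃ n : ℕ, ∀ m, n ≤ m → X 1 ^ m ∈ Ideal.span {u, v} := by
  obtain ⟨a, b, hab⟩ := h
  set n := max a.natDegree b.natDegree
  refine ⟨n + e, fun m hm => Ideal.pow_mem_of_pow_mem _ ?_ hm⟩
  have key := congrArg (fun p => Polynomial.homogenize p (n + e)) hab
  simp only [Polynomial.homogenize_add, Polynomial.homogenize_one] at key
  rw [Polynomial.homogenize_mul _ _ (le_max_left _ _) (natDegree_aeval_X_one_le hu),
    Polynomial.homogenize_mul _ _ (le_max_right _ _) (natDegree_aeval_X_one_le hv),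
    Polynomial.homogenize_eq_of_isHomogeneous hu rfl,
    Polynomial.homogenize_eq_of_isHomogeneous hv rfl] at key
  exact Ideal.mem_span_pair.2 ⟨_, _, key⟩

/-- The Jacobian ideal of a squarefree binary form contains all large powers of `y`. -/
theorem exists_X_one_pow_mem_span_pderiv {K : Type*} [Field K] [CharZero K]
    {g : MvPolynomial (Fin 2) K} {d : ℕ} (hg : g.IsHomogeneous d) (hd : d ≠ 0)
    (hsf : Squarefree g) :
    ∃ n : ℕ, ∀ m, n ≤ m → X 1 ^ m ∈ Ideal.span {pderiv 0 g, pderiv 1 g} := by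
  refine exists_X_one_pow_mem_span_pair hg.pderiv hg.pderiv ?_
  obtain ⟨a, b, hab⟩ := PerfectField.separable_iff_squarefree.2 (squarefree_aeval_X_one hg hsf)
  have euler := congrArg (aeval ![Polynomial.X, (1 : Polynomial K)]) hg.sum_X_mul_pderiv
  simp only [Fin.sum_univ_two, map_add, map_mul, aeval_X, map_natCast, Matrix.cons_val_zero,
    Matrix.cons_val_one, one_mul, nsmul_eq_mul] at euler
  rw [← aeval_X_one_pderiv_zero] at hab
  have hd' : Polynomial.C (d : K)⁻¹ * (d : Polynomial K) = 1 := by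
    rw [← Polynomial.C_eq_natCast, ← Polynomial.C_mul, inv_mul_cancel₀ (Nat.cast_ne_zero.2 hd),
      Polynomial.C_1]
  refine ⟨b + a * Polynomial.C (d : K)⁻¹ * Polynomial.X, a * Polynomial.C (d : K)⁻¹, ?_⟩
  linear_combination hab + a * Polynomial.C (d : K)⁻¹ * euler +
    a * aeval ![Polynomial.X, (1 : Polynomial K)] g * hd'

/-- The Jacobian ideal of a squarefree binary form contains all large powers of `x`. -/
theorem exists_X_zero_pow_mem_span_pderiv {K : Type*} [Field K] [CharZero K]
    {g : MvPolynomial (Fin 2) K} {d : ℕ} (hg : g.IsHomogeneous d) (hd : d ≠ 0)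
    (hsf : Squarefree g) :
    ∃ n : ℕ, ∀ m, n ≤ m → X 0 ^ m ∈ Ideal.span {pderiv 0 g, pderiv 1 g} := by
  let σ := renameEquiv K (Equiv.swap (0 : Fin 2) 1)
  have hσσ : ∀ p, σ (σ p) = p := fun p => by simp [σ, rename_rename, ← Equiv.coe_trans]
  have hsf' : Squarefree (σ g) := by
    rintro q ⟨r, hr⟩
    have h : IsUnit (σ q) := hsf _ ⟨σ r, by rw [← map_mul, ← map_mul, ← hr, hσσ]⟩
    simpa [hσσ] using h.map σ
  have hp (i : Fin 2) : pderiv (Equiv.swap 0 1 i) (σ g) = σ (pderiv i g) :=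
    pderiv_rename (Equiv.swap (0 : Fin 2) 1).injective i g
  have h0 : pderiv 1 (σ g) = σ (pderiv 0 g) := by simpa using hp 0
  have h1 : pderiv 0 (σ g) = σ (pderiv 1 g) := by simpa using hp 1
  obtain ⟨n, hn⟩ := exists_X_one_pow_mem_span_pderiv
    (hg.rename_isHomogeneous (f := Equiv.swap (0 : Fin 2) 1)) hd hsf'
  refine ⟨n, fun m hm => ?_⟩
  obtain ⟨a, b, hab⟩ := Ideal.mem_span_pair.1 (hn m hm)
  change a * pderiv 0 (σ g) + b * pderiv 1 (σ g) = _ at hab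
  rw [h0, h1] at hab
  have := congrArg σ hab
  simp only [map_add, map_mul, map_pow, hσσ] at this
  refine Ideal.mem_span_pair.2 ⟨σ b, σ a, ?_⟩
  rw [add_comm, this]
  simp [σ]

/-- If `g ∈ ℝ[x,y]` is a squarefree homogeneous polynomial of degree `d ≥ 2`,
then some power `x^m` and `y^m` (with `m ≥ 1`) lie in the Jacobian ideal of `g`,
i.e. the ideal generated by the two formal partial derivatives of `g`. -/
theorem stmt_15 (g : MvPolynomial (Fin 2) ℝ) (d : ℕ) (hd : 2 ≤ d)
    (hsf : Squarefree g) (hhom : g.IsHomogeneous d) :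
    ∃ m : ℕ, 1 ≤ m ∧
      X 0 ^ m ∈ Ideal.span ({pderiv (0 : Fin 2) g, pderiv (1 : Fin 2) g} :
        Set (MvPolynomial (Fin 2) ℝ)) ∧
      X 1 ^ m ∈ Ideal.span ({pderiv (0 : Fin 2) g, pderiv (1 : Fin 2) g} :
        Set (MvPolynomial (Fin 2) ℝ)) := by
  obtain ⟨n₀, h₀⟩ := exists_X_zero_pow_mem_span_pderiv hhom (by lia) hsf
  obtain ⟨n₁, h₁⟩ := exists_X_one_pow_mem_span_pderiv hhom (by lia) hsf
  exact ⟨n₀ + n₁ + 1, by lia, h₀ _ (by lia), h₁ _ (by lia)⟩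
end
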